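/- The sequence of real numbers r ↦ 2/r + 2 · Σ_{n=1}^{2r−1} 1/√(r² + 2nr − n²), indexed by integers r ≥ 1, converges to π as r → ∞. -/

import Mathlib

open Filter Finset Real

noncomputable def gAux (x : ℝ) : ℝ := 1 / Real.sqrt (2 - (x - 1) ^ 2)

noncomputable def FAux (x : ℝ) : ℝ := Real.arcsin ((x - 1) / Real.sqrt 2)

lemma FAux_deriv (x : ℝ) (h0 : 0 ≤ x) (h2 : x ≤ 2) : HasDerivAt FAux (gAux x) x := by
  have hs : Real.sqrt 2 ^ 2 = 2 := Real.sq_sqrt (by norm_num)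
  have hp : 0 < Real.sqrt 2 := by positivity
  have hs1 : 1 < Real.sqrt 2 := by nlinarith
  have hA : 0 < 2 - (x - 1) ^ 2 := by nlinarith
  have h1 : (x - 1) / Real.sqrt 2 ≠ -1 := by
    intro h
    rw [div_eq_iff hp.ne'] at h
    linarith
  have h1' : (x - 1) / Real.sqrt 2 ≠ 1 := by
    intro h
    rw [div_eq_iff hp.ne'] at h
    linarith
  have h := (Real.hasDerivAt_arcsin h1 h1').comp x
    (((hasDerivAt_id x).sub_const 1).div_const (Real.sqrt 2))
  have e : gAux x = 1 / Real.sqrt (1 - ((x - 1) / Real.sqrt 2) ^ 2) * (1 / Real.sqrt 2) := by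
    have : 2 - (x - 1) ^ 2 = (1 - ((x - 1) / Real.sqrt 2) ^ 2) * 2 := by
      rw [div_pow, hs]; ring
    rw [gAux, this, Real.sqrt_mul' _ (by norm_num)]
    rw [one_div_mul_one_div]
  rw [e]
  exact h

lemma gAux_lip (x y : ℝ) (hx0 : 0 ≤ x) (hx2 : x ≤ 2) (hy0 : 0 ≤ y) (hy2 : y ≤ 2) :
    |gAux x - gAux y| ≤ |x - y| := by
  have hA : 1 ≤ 2 - (x - 1) ^ 2 := by nlinarith
  have hB : 1 ≤ 2 - (y - 1) ^ 2 := by nlinarith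
  have ha := Real.sq_sqrt (show 0 ≤ 2 - (x - 1) ^ 2 by linarith)
  have hb := Real.sq_sqrt (show 0 ≤ 2 - (y - 1) ^ 2 by linarith)
  have ha1 := Real.one_le_sqrt.2 hA
  have hb1 := Real.one_le_sqrt.2 hB
  unfold gAux
  set a := Real.sqrt (2 - (x - 1) ^ 2)
  set b := Real.sqrt (2 - (y - 1) ^ 2)
  have hab : 1 ≤ a * b := by nlinarith
  have hden : 2 ≤ a * b * (a + b) := by nlinarith
  have e : 1 / a - 1 / b = (x - y) * (x + y - 2) / (a * b * (a + b)) := by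
    have : (x - y) * (x + y - 2) = (b - a) * (a + b) := by nlinarith
    rw [this]
    field_simp
  rw [e, abs_div, abs_mul, abs_of_pos (show 0 < a * b * (a + b) by linarith),
    div_le_iff₀ (by linarith)]
  apply mul_le_mul_of_nonneg_left _ (abs_nonneg _)
  apply le_trans _ hden
  rw [abs_le]; constructor <;> linarith

lemma step_bound (x y : ℝ) (hx0 : 0 ≤ x) (hxy : x < y) (hy2 : y ≤ 2) :
    |gAux x * (y - x) - (FAux y - FAux x)| ≤ (y - x) ^ 2 := by
  obtain ⟨c, ⟨hc1, hc2⟩, hc⟩ := exists_hasDerivAt_eq_slope FAux gAux hxy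
    (fun z hz => (FAux_deriv z (by linarith [hz.1]) (by linarith [hz.2])).continuousAt.continuousWithinAt)
    (fun z hz => FAux_deriv z (by linarith [hz.1]) (by linarith [hz.2]))
  have hd : 0 < y - x := by linarith
  rw [eq_div_iff hd.ne'] at hc
  rw [← hc, ← sub_mul, abs_mul, abs_of_pos hd, sq]
  apply mul_le_mul_of_nonneg_right _ hd.le
  refine (gAux_lip x c hx0 (by linarith) (by linarith) (by linarith)).trans ?_
  rw [abs_le]; constructor <;> linarith

lemma FAux_total : FAux 2 - FAux 0 = Real.pi / 2 := by
  have h : Real.arcsin (1 / Real.sqrt 2) = Real.pi / 4 := by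
    have : 1 / Real.sqrt 2 = Real.sin (Real.pi / 4) := by
      rw [Real.sin_pi_div_four, div_eq_div_iff (by positivity) (by norm_num)]
      simp
    rw [this, Real.arcsin_sin] <;> linarith [Real.pi_pos]
  unfold FAux
  rw [show ((0:ℝ) - 1) / Real.sqrt 2 = -(1 / Real.sqrt 2) by ring, Real.arcsin_neg,
    show ((2:ℝ) - 1) = 1 by norm_num, h]
  ring

lemma sum_bound (r : ℕ) (hr : 0 < r) :
    |(2 / (r : ℝ) + 2 * ∑ n ∈ Finset.Icc 1 (2 * r - 1),
        1 / Real.sqrt ((r : ℝ) ^ 2 + 2 * n * r - n ^ 2)) - Real.pi| ≤ 4 / r := by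
  have hr' : (0 : ℝ) < r := by exact_mod_cast hr
  have hterm : ∀ n : ℕ, 1 / Real.sqrt ((r : ℝ) ^ 2 + 2 * n * r - n ^ 2)
      = gAux (n / r) * (((n + 1 : ℕ) : ℝ) / r - n / r) := by
    intro n
    have : (r : ℝ) ^ 2 + 2 * n * r - n ^ 2 = (2 - ((n : ℝ) / r - 1) ^ 2) * (r : ℝ) ^ 2 := by
      field_simp; ring
    rw [this, Real.sqrt_mul' _ (by positivity), Real.sqrt_sq hr'.le, gAux, ← one_div_mul_one_div]
    push_cast
    ring
  have hsum : 2 / (r : ℝ) + 2 * ∑ n ∈ Finset.Icc 1 (2 * r - 1),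
        1 / Real.sqrt ((r : ℝ) ^ 2 + 2 * n * r - n ^ 2)
      = 2 * ∑ n ∈ Finset.range (2 * r), 1 / Real.sqrt ((r : ℝ) ^ 2 + 2 * n * r - n ^ 2) := by
    have hI : Finset.Icc 1 (2 * r - 1) = Finset.Ico 1 (2 * r) := by
      ext n; simp only [Finset.mem_Icc, Finset.mem_Ico]; omega
    rw [hI, Finset.range_eq_Ico, Finset.sum_eq_sum_Ico_succ_bot (show 0 < 2 * r by omega)]
    simp [Real.sqrt_sq hr'.le]
    ring
  have htel : ∑ n ∈ Finset.range (2 * r), (FAux (((n + 1 : ℕ) : ℝ) / r) - FAux ((n : ℝ) / r))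
      = Real.pi / 2 := by
    rw [Finset.sum_range_sub (fun n : ℕ => FAux ((n : ℝ) / r)), ← FAux_total]
    push_cast
    rw [mul_div_assoc, div_self hr'.ne']
    simp
  have hmain : |∑ n ∈ Finset.range (2 * r), 1 / Real.sqrt ((r : ℝ) ^ 2 + 2 * n * r - n ^ 2)
      - Real.pi / 2| ≤ 2 / r := by
    rw [← htel, ← Finset.sum_sub_distrib]
    refine (Finset.abs_sum_le_sum_abs _ _).trans ?_
    have : ∀ n ∈ Finset.range (2 * r), |1 / Real.sqrt ((r : ℝ) ^ 2 + 2 * n * r - n ^ 2) -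
        (FAux (((n + 1 : ℕ) : ℝ) / r) - FAux ((n : ℝ) / r))| ≤ (1 / r : ℝ) ^ 2 := by
      intro n hn
      rw [hterm]
      have hn' : ((n + 1 : ℕ) : ℝ) ≤ 2 * r := by
        exact_mod_cast Finset.mem_range.1 hn
      refine (step_bound _ _ (by positivity) ?_ ?_).trans (le_of_eq ?_)
      · apply div_lt_div_of_pos_right _ hr'
        push_cast; linarith
      · rwa [div_le_iff₀ hr']
      · push_cast; ring
    refine (Finset.sum_le_sum this).trans (le_of_eq ?_)
    simp only [Finset.sum_const, Finset.card_range, nsmul_eq_mul]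
    push_cast
    field_simp
  rw [hsum]
  rw [abs_le] at hmain ⊢
  have h4 : 4 / (r : ℝ) = 2 * (2 / r) := by ring
  rw [h4]
  constructor <;> linarith [hmain.1, hmain.2]

/-- the sequence
`r ↦ 2/r + 2 · ∑_{n=1}^{2r-1} 1/√(r² + 2nr - n²)` converges to `π`. -/
theorem asymptotic_arithmeticMean_tendsto_pi :
    Filter.Tendsto (fun r : ℕ =>
      2 / (r : ℝ) + 2 * ∑ n ∈ Finset.Icc 1 (2 * r - 1),
        1 / Real.sqrt ((r : ℝ) ^ 2 + 2 * n * r - n ^ 2))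
      Filter.atTop (nhds Real.pi) := by
  rw [tendsto_iff_dist_tendsto_zero]
  refine squeeze_zero' (Eventually.of_forall fun _ => dist_nonneg) ?_
    (tendsto_const_div_atTop_nhds_zero_nat 4)
  filter_upwards [eventually_gt_atTop 0] with r hr
  rw [Real.dist_eq]
  exact sum_bound r hr
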